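/- arXiv:2312.01159 — 2 statements merged into one kernel-verified Lean document; each statement's English description precedes it below -/
import Mathlib

section
/- There exists a 3-coloring f of the grid [20] × [20] (a function from {1,...,20} × {1,...,20} to a set of 3 colors) containing no monochromatic L; that is, there are no positive integers i, j, t with i + t ≤ 20 and j + t ≤ 20 such that f(i, j) = f(i, j + t) = f(i + t, j + t). Consequently R_3(L) ≥ 21. -/
/-- The coloring `f` makes some `L` in the `[n] × [n]` grid monochromatic; `R_c(L)` is the least `n`
for which every `f` with values in `Fin c` does so. The grid points are numbered from `1`, and the
colors that `f` gives to other points play no role. -/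
def HasMonochromaticL {α : Type*} (n : ℕ) (f : ℕ × ℕ → α) : Prop :=
  ∃ i j t : ℕ, 1 ≤ i ∧ 1 ≤ j ∧ 1 ≤ t ∧ i + t ≤ n ∧ j + t ≤ n ∧
    f (i, j) = f (i, j + t) ∧ f (i, j) = f (i + t, j + t)

theorem hasMonochromaticL_iff_exists_mem_Icc {α : Type*} {n : ℕ} {f : ℕ × ℕ → α} :
    HasMonochromaticL n f ↔
      ∃ i ∈ Finset.Icc 1 n, ∃ j ∈ Finset.Icc 1 n, ∃ t ∈ Finset.Icc 1 (n - max i j),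
        f (i, j) = f (i, j + t) ∧ f (i, j) = f (i + t, j + t) := by
  simp only [Finset.mem_Icc]
  constructor
  · rintro ⟨i, j, t, hi, hj, ht, hit, hjt, hL⟩
    exact ⟨i, by lia, j, by lia, t, by lia, hL⟩
  · rintro ⟨i, hi, j, hj, t, ht, hL⟩
    exact ⟨i, j, t, by lia, by lia, by lia, by lia, by lia, hL⟩

instance {α : Type*} [DecidableEq α] (n : ℕ) (f : ℕ × ℕ → α) :
    Decidable (HasMonochromaticL n f) :=
  decidable_of_iff' _ hasMonochromaticL_iff_exists_mem_Icc

/-- A 3-coloring of the `[20] × [20]` grid without a monochromatic `L`, as a matrix whose rows are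
given by the first coordinate. -/
def lFreeMatrix : Matrix (Fin 20) (Fin 20) (Fin 3) :=
  !![0, 2, 2, 1, 0, 2, 1, 0, 2, 1, 1, 0, 2, 1, 0, 2, 1, 0, 0, 2;
     0, 0, 1, 2, 1, 0, 2, 1, 0, 2, 2, 0, 2, 1, 0, 2, 1, 0, 1, 0;
     2, 1, 1, 2, 0, 2, 1, 0, 2, 1, 0, 2, 1, 0, 2, 1, 0, 2, 0, 2;
     2, 0, 2, 1, 0, 1, 0, 2, 1, 0, 2, 1, 0, 2, 1, 0, 2, 1, 2, 1;
     1, 2, 2, 2, 1, 0, 1, 0, 1, 0, 0, 2, 1, 2, 1, 0, 0, 2, 2, 1;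
     1, 2, 0, 0, 2, 2, 1, 2, 0, 2, 1, 1, 0, 1, 0, 0, 2, 1, 1, 0;
     0, 2, 2, 1, 1, 1, 0, 2, 0, 2, 1, 2, 1, 0, 0, 1, 0, 2, 0, 2;
     2, 1, 0, 2, 2, 0, 2, 1, 0, 1, 2, 1, 0, 0, 1, 0, 0, 2, 2, 1;
     2, 0, 0, 1, 0, 0, 1, 0, 2, 1, 1, 1, 2, 2, 0, 2, 2, 1, 1, 0;
     0, 2, 2, 2, 1, 1, 1, 0, 1, 0, 2, 2, 2, 0, 0, 2, 1, 2, 0, 2;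
     0, 2, 0, 1, 2, 2, 0, 1, 1, 0, 1, 0, 0, 0, 2, 1, 2, 1, 2, 1;
     2, 0, 2, 1, 1, 1, 0, 1, 2, 2, 0, 2, 1, 2, 1, 0, 1, 0, 1, 0;
     2, 1, 1, 2, 0, 2, 1, 1, 0, 0, 2, 1, 0, 2, 2, 1, 1, 0, 0, 2;
     1, 2, 0, 2, 0, 2, 1, 2, 2, 1, 0, 0, 2, 1, 0, 0, 2, 1, 2, 1;
     1, 0, 2, 0, 0, 1, 2, 2, 1, 0, 0, 1, 2, 1, 2, 1, 1, 0, 1, 0;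
     1, 0, 0, 0, 2, 1, 0, 0, 2, 0, 2, 1, 2, 1, 2, 0, 2, 0, 0, 2;
     1, 2, 2, 1, 0, 1, 2, 2, 1, 0, 1, 0, 2, 0, 1, 2, 1, 0, 2, 1;
     1, 0, 0, 1, 1, 0, 2, 0, 0, 1, 0, 0, 1, 2, 1, 2, 0, 2, 2, 0;
     2, 1, 1, 1, 2, 2, 1, 2, 1, 1, 0, 1, 0, 2, 2, 2, 2, 1, 1, 0;
     1, 1, 0, 0, 2, 0, 2, 1, 0, 2, 1, 1, 0, 2, 0, 1, 0, 0, 0, 2]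

/-- The coloring displayed in `lFreeMatrix`, moved from matrix indices, which start at `0`, to grid
points, which start at `1`, and continued arbitrarily to `ℕ × ℕ`. -/
def lFreeColoring (p : ℕ × ℕ) : Fin 3 :=
  lFreeMatrix (Fin.ofNat 20 (p.1 - 1)) (Fin.ofNat 20 (p.2 - 1))

theorem not_hasMonochromaticL_lFreeColoring : ¬ HasMonochromaticL 20 lFreeColoring := by
  decide +kernel

/-- Lower-bound half of Theorem 3.1: there is a 3-coloring of the `[20] × [20]` grid
with no monochromatic `L`, hence `R₃(L) ≥ 21`. -/
theorem R3L_lower :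
    ∃ f : ℕ × ℕ → Fin 3,
      ¬ ∃ i j t : ℕ, 1 ≤ i ∧ 1 ≤ j ∧ 1 ≤ t ∧ i + t ≤ 20 ∧ j + t ≤ 20 ∧
        f (i, j) = f (i, j + t) ∧ f (i, j) = f (i + t, j + t) :=
  ⟨lFreeColoring, not_hasMonochromaticL_lFreeColoring⟩
end

section
/- For every positive integer c there exists a positive integer n with n > c such that every c-coloring f of [n] = {1,...,n} contains two integers of the same color that are a perfect square apart; that is, there exist a ∈ [n] and a positive integer d with a + d² ≤ n and f(a) = f(a + d²). -/
/-!
The proof is by color focusing. Suppose that `f` has no two equal colors a square apart, and that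
the points `a + d ^ 2`, for `d` in some finite set, show `r` distinct colors. Then `f a` is a new
color. By van der Waerden, a whole window around such a configuration repeats along a progression
of difference `D`. Since `(D + d) ^ 2 = D ^ 2 + d ^ 2 + 2 * d * D`, the color of `a + d ^ 2` is
seen again at `a - D ^ 2 + (D + d) ^ 2`, while `a` itself is `a - D ^ 2 + D ^ 2`: the point
`a - D ^ 2` is a square away from `r + 1` distinct colors. Iterating exhausts the colors.
-/

-- Compactness of `M → κ` cuts the infinitary theorem down to finitely many candidate copies.
theorem exists_finset_mono_homothetic_copy {M : Type*} [AddCommMonoid M] (κ : Type*) [Finite κ]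
    (S : Finset M) : ∃ T : Finset (ℕ+ × M × κ), ∀ C : M → κ,
      ∃ x ∈ T, ∀ s ∈ S, C ((x.1 : ℕ) • s + x.2.1) = x.2.2 := by
  let _ : TopologicalSpace κ := ⊥
  have _ : DiscreteTopology κ := ⟨rfl⟩
  let U (x : ℕ+ × M × κ) : Set (M → κ) :=
    ⋂ s ∈ S, (fun C => C ((x.1 : ℕ) • s + x.2.1)) ⁻¹' {x.2.2}
  have mem_U {C x} : C ∈ U x ↔ ∀ s ∈ S, C ((x.1 : ℕ) • s + x.2.1) = x.2.2 := Set.mem_iInter₂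
  have isOpen_U (x) : IsOpen (U x) := isOpen_biInter_finset fun _ _ =>
    (isOpen_discrete {x.2.2}).preimage (continuous_apply _)
  have cover : Set.univ ⊆ ⋃ x, U x := fun C _ => by
    obtain ⟨a, ha, b, c, hc⟩ := Combinatorics.exists_mono_homothetic_copy S C
    exact Set.mem_iUnion.2 ⟨(⟨a, ha⟩, b, c), mem_U.2 hc⟩
  obtain ⟨T, hT⟩ := isCompact_univ.elim_finite_subcover U isOpen_U cover
  refine ⟨T, fun C => ?_⟩
  obtain ⟨x, mem_T, hx⟩ := Set.mem_iUnion₂.1 (hT (Set.mem_univ C))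
  exact ⟨x, mem_T, mem_U.1 hx⟩

theorem exists_bounded_mono_arithmetic_progression (κ : Type*) [Finite κ] (K : ℕ) :
    ∃ M : ℕ, ∀ C : ℕ → κ, ∃ b ≤ M, ∃ D ≤ M, 1 ≤ D ∧ ∀ j ≤ K, C (b + j * D) = C b := by
  obtain ⟨T, hT⟩ := exists_finset_mono_homothetic_copy κ (Finset.range (K + 1))
  refine ⟨T.sup fun x => max (x.1 : ℕ) x.2.1, fun C => ?_⟩
  obtain ⟨⟨D, b, c⟩, mem_T, mono⟩ := hT C
  have bound : max (D : ℕ) b ≤ T.sup fun x => max (x.1 : ℕ) x.2.1 :=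
    Finset.le_sup (f := fun x : ℕ+ × ℕ × κ => max (x.1 : ℕ) x.2.1) mem_T
  have color_eq (j : ℕ) (hj : j ≤ K) : C (b + j * D) = c := by
    simpa only [smul_eq_mul, mul_comm (D : ℕ), add_comm b] using
      mono j (Finset.mem_range.2 (Nat.lt_succ_of_le hj))
  have color_base : C b = c := by simpa only [zero_mul, add_zero] using color_eq 0 (Nat.zero_le K)
  exact ⟨b, (le_max_right _ b).trans bound, D, (le_max_left _ b).trans bound, D.pos,
    fun j hj => (color_eq j hj).trans color_base.symm⟩

section ColorFocusing

variable {κ : Type*}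

/-- The coloring `f` gives distinct colors to any two points of `[1, N]` a positive square apart;
its values outside `[1, N]` are irrelevant. -/
def SquareAvoiding (f : ℕ → κ) (N : ℕ) : Prop :=
  ∀ a d : ℕ, 1 ≤ a → 1 ≤ d → a + d ^ 2 ≤ N → f a ≠ f (a + d ^ 2)

/-- The colors on which `a` is focused: those of the points of `[1, N]` that lie a positive square
to the right of `a`. -/
def squareColors (f : ℕ → κ) (N a : ℕ) : Set κ :=
  {k | ∃ d : ℕ, 1 ≤ d ∧ a + d ^ 2 ≤ N ∧ f (a + d ^ 2) = k}

theorem SquareAvoiding.translate {f : ℕ → κ} {N N' m : ℕ} (hf : SquareAvoiding f N')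
    (hm : N + m ≤ N') : SquareAvoiding (fun t => f (t + m)) N := fun a d ha hd hN => by
  simpa only [add_right_comm a] using hf (a + m) d (by omega) hd (by omega)

theorem SquareAvoiding.notMem_squareColors {f : ℕ → κ} {N a : ℕ} (hf : SquareAvoiding f N)
    (ha : 1 ≤ a) : f a ∉ squareColors f N a :=
  fun ⟨d, hd, hN, h⟩ => hf a d ha hd hN h.symm

theorem insert_squareColors_subset {f : ℕ → κ} {N N' a e D : ℕ} (haN : a ≤ N) (hD : 1 ≤ D)
    (hN' : N + (e + D ^ 2) + 2 * N * D ≤ N')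
    (periodic : ∀ j ≤ 2 * N, ∀ t ≤ N, f (t + (e + D ^ 2) + j * D) = f (t + (e + D ^ 2))) :
    insert (f (a + (e + D ^ 2))) (squareColors (fun t => f (t + (e + D ^ 2))) N a) ⊆
      squareColors f N' (a + e) := by
  rintro k (rfl | ⟨d, hd, hdN, rfl⟩)
  · exact ⟨D, hD, by omega, by rw [add_assoc]⟩
  · have d_le : d ≤ N := (Nat.le_self_pow two_ne_zero d).trans (by omega)
    have square_add : a + e + (D + d) ^ 2 = a + d ^ 2 + (e + D ^ 2) + 2 * d * D := by ring
    have shift_le : 2 * d * D ≤ 2 * N * D := by gcongr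
    refine ⟨D + d, by omega, by omega, ?_⟩
    rw [square_add]
    exact periodic (2 * d) (by omega) (a + d ^ 2) hdN

theorem exists_le_ncard_squareColors (κ : Type*) [Finite κ] (r : ℕ) :
    ∃ N : ℕ, ∀ f : ℕ → κ, SquareAvoiding f N →
      ∃ a : ℕ, 1 ≤ a ∧ a ≤ N ∧ r ≤ (squareColors f N a).ncard := by
  induction r with
  | zero => exact ⟨1, fun f _ => ⟨1, le_rfl, le_rfl, Nat.zero_le _⟩⟩
  | succ r ih =>
    obtain ⟨N, hN⟩ := ih
    obtain ⟨M, hM⟩ := exists_bounded_mono_arithmetic_progression (Fin (N + 1) → κ) (2 * N)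
    refine ⟨N + (M + M ^ 2) + 2 * N * M, fun f hf => ?_⟩
    -- The offset `M ^ 2` leaves room to move the focus left by `D ^ 2`.
    obtain ⟨b, hb, D, hDM, hD, window_eq⟩ := hM fun x t => f (t + (x + M ^ 2))
    obtain ⟨e, he⟩ : ∃ e, b + M ^ 2 = e + D ^ 2 :=
      Nat.exists_eq_add_of_le' ((Nat.pow_le_pow_left hDM 2).trans (Nat.le_add_left _ _))
    have periodic (j : ℕ) (hj : j ≤ 2 * N) (t : ℕ) (ht : t ≤ N) :
        f (t + (e + D ^ 2) + j * D) = f (t + (e + D ^ 2)) := by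
      simpa only [← he, add_assoc, add_comm (M ^ 2)] using
        congrFun (window_eq j hj) ⟨t, Nat.lt_succ_of_le ht⟩
    have progression_le : 2 * N * D ≤ 2 * N * M := by gcongr
    have hf' : SquareAvoiding (fun t => f (t + (e + D ^ 2))) N := hf.translate (by omega)
    obtain ⟨a, ha, haN, hr⟩ := hN _ hf'
    refine ⟨a + e, by omega, by omega, ?_⟩
    calc r + 1 ≤ (squareColors (fun t => f (t + (e + D ^ 2))) N a).ncard + 1 := by gcongr
      _ = (insert (f (a + (e + D ^ 2))) (squareColors _ N a)).ncard :=
        (Set.ncard_insert_of_notMem (hf'.notMem_squareColors ha)).symm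
      _ ≤ (squareColors f _ (a + e)).ncard :=
        Set.ncard_le_ncard (insert_squareColors_subset haN hD (by omega) periodic)

end ColorFocusing

theorem vanDerSquare_exists_general (κ : Type*) [Finite κ] :
    ∃ N : ℕ, ∀ f : ℕ → κ,
      ∃ a d : ℕ, 1 ≤ a ∧ 1 ≤ d ∧ a + d ^ 2 ≤ N ∧ f a = f (a + d ^ 2) := by
  obtain ⟨N, hN⟩ := exists_le_ncard_squareColors κ (Nat.card κ + 1)
  refine ⟨N, fun f => ?_⟩
  by_contra! avoiding
  obtain ⟨a, -, -, card_lt⟩ := hN f avoiding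
  exact (Set.ncard_le_card (squareColors f N a)).not_gt card_lt

/-- Corollary 4.1 (van der Square numbers): for every positive `c` there is an `n > c`
such that every `c`-coloring of `[n]` contains two same-colored integers a
perfect square apart. -/
theorem vanDerSquare_exists (c : ℕ) (hc : 1 ≤ c) :
    ∃ n : ℕ, c < n ∧ ∀ f : ℕ → Fin c,
      ∃ a d : ℕ, 1 ≤ a ∧ 1 ≤ d ∧ a + d ^ 2 ≤ n ∧ f a = f (a + d ^ 2) := by
  obtain ⟨N, hN⟩ := vanDerSquare_exists_general (Fin c)
  refine ⟨N + c + 1, by omega, fun f => ?_⟩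
  obtain ⟨a, d, ha, hd, hle, h⟩ := hN f
  exact ⟨a, d, ha, hd, by omega, h⟩
end
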